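/- arXiv:2206.06148 — 2 statements merged into one kernel-verified Lean document; each statement's English description precedes it below -/
import Mathlib

section
/- The five simple graphs G₄, G₈, G₁₁, G₁₂, G₁₃ on vertex set {0,1,…,11} defined in the context are pairwise non-isomorphic (there is no graph isomorphism between any two distinct ones). -/
open Polynomial SimpleGraph

/-- Edge list (each unordered edge listed once) of the graph `G4`. -/
def edgesG4 : List (Fin 12 × Fin 12) :=
  [(0, 1), (0, 3), (0, 4), (0, 5), (0, 6), (1, 2), (1, 4), (1, 7), (1, 8), (2, 3), (2, 8), (2, 10), (2, 11), (3, 4), (3, 8), (3, 9), (4, 5), (4, 7), (4, 8), (5, 6), (5, 7), (5, 10), (5, 11), (6, 7), (6, 9), (6, 11), (7, 10), (8, 9), (8, 11), (9, 10), (9, 11), (10, 11)]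

/-- The simple graph on vertex set `Fin 12` with the given edge set. -/
def G4 : SimpleGraph (Fin 12) :=
  SimpleGraph.fromRel (fun i j => (i, j) ∈ edgesG4)

instance : DecidableRel G4.Adj := fun a b =>
  inferInstanceAs (Decidable (a ≠ b ∧ ((a, b) ∈ edgesG4 ∨ (b, a) ∈ edgesG4)))

/-- Edge list (each unordered edge listed once) of the graph `G8`. -/
def edgesG8 : List (Fin 12 × Fin 12) :=
  [(0, 1), (0, 3), (0, 4), (0, 5), (0, 6), (1, 2), (1, 4), (1, 5), (1, 7), (2, 3), (2, 4), (2, 9), (2, 10), (3, 4), (3, 9), (3, 11), (4, 5), (4, 9), (5, 6), (5, 7), (5, 8), (6, 7), (6, 8), (6, 11), (7, 8), (7, 10), (8, 9), (8, 10), (8, 11), (9, 10), (9, 11), (10, 11)]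

/-- The simple graph on vertex set `Fin 12` with the given edge set. -/
def G8 : SimpleGraph (Fin 12) :=
  SimpleGraph.fromRel (fun i j => (i, j) ∈ edgesG8)

instance : DecidableRel G8.Adj := fun a b =>
  inferInstanceAs (Decidable (a ≠ b ∧ ((a, b) ∈ edgesG8 ∨ (b, a) ∈ edgesG8)))

/-- Edge list (each unordered edge listed once) of the graph `G11`. -/
def edgesG11 : List (Fin 12 × Fin 12) :=
  [(0, 1), (0, 3), (0, 4), (0, 5), (0, 6), (1, 2), (1, 7), (1, 8), (1, 9), (2, 3), (2, 5), (2, 9), (2, 10), (3, 4), (3, 8), (3, 11), (4, 5), (4, 7), (4, 8), (4, 10), (5, 6), (5, 9), (5, 10), (6, 7), (6, 9), (6, 11), (7, 8), (7, 10), (8, 9), (8, 11), (9, 11), (10, 11)]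

/-- The simple graph on vertex set `Fin 12` with the given edge set. -/
def G11 : SimpleGraph (Fin 12) :=
  SimpleGraph.fromRel (fun i j => (i, j) ∈ edgesG11)

instance : DecidableRel G11.Adj := fun a b =>
  inferInstanceAs (Decidable (a ≠ b ∧ ((a, b) ∈ edgesG11 ∨ (b, a) ∈ edgesG11)))

/-- Edge list (each unordered edge listed once) of the graph `G12`. -/
def edgesG12 : List (Fin 12 × Fin 12) :=
  [(0, 1), (0, 3), (0, 4), (0, 5), (0, 6), (1, 2), (1, 7), (1, 8), (1, 9), (2, 3), (2, 7), (2, 9), (2, 10), (3, 4), (3, 6), (3, 11), (4, 5), (4, 8), (4, 10), (4, 11), (5, 6), (5, 9), (5, 10), (5, 11), (6, 7), (6, 11), (7, 8), (7, 10), (8, 9), (8, 10), (8, 11), (9, 10), (9, 11)]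

/-- The simple graph on vertex set `Fin 12` with the given edge set. -/
def G12 : SimpleGraph (Fin 12) :=
  SimpleGraph.fromRel (fun i j => (i, j) ∈ edgesG12)

instance : DecidableRel G12.Adj := fun a b =>
  inferInstanceAs (Decidable (a ≠ b ∧ ((a, b) ∈ edgesG12 ∨ (b, a) ∈ edgesG12)))

/-- Edge list (each unordered edge listed once) of the graph `G13`. -/
def edgesG13 : List (Fin 12 × Fin 12) :=
  [(0, 1), (0, 3), (0, 4), (0, 5), (0, 6), (1, 2), (1, 7), (1, 8), (1, 9), (2, 3), (2, 7), (2, 9), (2, 10), (3, 4), (3, 6), (3, 11), (4, 5), (4, 8), (4, 9), (4, 11), (5, 6), (5, 8), (5, 10), (5, 11), (6, 7), (6, 11), (7, 8), (7, 10), (8, 9), (8, 10), (9, 10), (9, 11), (10, 11)]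

/-- The simple graph on vertex set `Fin 12` with the given edge set. -/
def G13 : SimpleGraph (Fin 12) :=
  SimpleGraph.fromRel (fun i j => (i, j) ∈ edgesG13)

instance : DecidableRel G13.Adj := fun a b =>
  inferInstanceAs (Decidable (a ≠ b ∧ ((a, b) ∈ edgesG13 ∨ (b, a) ∈ edgesG13)))

/-- Number of common neighbours. -/
def codeg (G : SimpleGraph (Fin 12)) [DecidableRel G.Adj] (i j : Fin 12) : ℕ :=
  (Finset.univ.filter (fun k => G.Adj i k ∧ G.Adj k j)).card

/-- Number of ordered adjacent pairs with `m` common neighbours. -/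
def invE (G : SimpleGraph (Fin 12)) [DecidableRel G.Adj] (m : ℕ) : ℕ :=
  (Finset.univ.filter (fun p : Fin 12 × Fin 12 => G.Adj p.1 p.2 ∧ codeg G p.1 p.2 = m)).card

/-- Number of ordered pairs with `m` common neighbours. -/
def invP (G : SimpleGraph (Fin 12)) [DecidableRel G.Adj] (m : ℕ) : ℕ :=
  (Finset.univ.filter (fun p : Fin 12 × Fin 12 => codeg G p.1 p.2 = m)).card

theorem codeg_iso {G H : SimpleGraph (Fin 12)} [DecidableRel G.Adj] [DecidableRel H.Adj]
    (e : G ≃g H) (i j : Fin 12) : codeg H (e i) (e j) = codeg G i j := by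
  unfold codeg
  symm
  refine Finset.card_equiv e.toEquiv (fun k => ?_)
  simp [e.map_adj_iff]

theorem invE_iso {G H : SimpleGraph (Fin 12)} [DecidableRel G.Adj] [DecidableRel H.Adj]
    (e : G ≃g H) (m : ℕ) : invE G m = invE H m := by
  unfold invE
  refine Finset.card_equiv (e.toEquiv.prodCongr e.toEquiv) (fun p => ?_)
  simp [e.map_adj_iff, codeg_iso e]

theorem invP_iso {G H : SimpleGraph (Fin 12)} [DecidableRel G.Adj] [DecidableRel H.Adj]
    (e : G ≃g H) (m : ℕ) : invP G m = invP H m := by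
  unfold invP
  refine Finset.card_equiv (e.toEquiv.prodCongr e.toEquiv) (fun p => ?_)
  simp [codeg_iso e]

/-- Adjacency read off from the binary digits of a number. -/
def tab (T : ℕ) (i j : Fin 12) : Bool := T.testBit (12 * i.val + j.val)

/-- Computable form of `codeg`. -/
def cdT (T : ℕ) (i j : Fin 12) : ℕ :=
  (Finset.univ.filter (fun k => tab T i k = true ∧ tab T k j = true)).card

theorem codeg_tab {G : SimpleGraph (Fin 12)} [DecidableRel G.Adj] {T : ℕ}
    (h : ∀ i j, G.Adj i j ↔ tab T i j = true) (i j : Fin 12) : codeg G i j = cdT T i j := by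
  simp only [codeg, cdT, h]

theorem invE_tab {G : SimpleGraph (Fin 12)} [DecidableRel G.Adj] {T : ℕ}
    (h : ∀ i j, G.Adj i j ↔ tab T i j = true) (m : ℕ) : invE G m =
      (Finset.univ.filter (fun p : Fin 12 × Fin 12 =>
        tab T p.1 p.2 = true ∧ cdT T p.1 p.2 = m)).card := by
  simp only [invE, codeg_tab h, h]

theorem invP_tab {G : SimpleGraph (Fin 12)} [DecidableRel G.Adj] {T : ℕ}
    (h : ∀ i j, G.Adj i j ↔ tab T i j = true) (m : ℕ) : invP G m =
      (Finset.univ.filter (fun p : Fin 12 × Fin 12 => cdT T p.1 p.2 = m)).card := by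
  simp only [invP, codeg_tab h]

theorem tabG4 : ∀ i j, G4.Adj i j ↔ tab 10304649732059472681338547382461463214510202 i j = true := by decide +kernel
theorem tabG8 : ∀ i j, G8.Adj i j ↔ tab 10152500964567636252897061212568855939600506 i j = true := by decide +kernel
theorem tabG11 : ∀ i j, G11.Adj i j ↔ tab 10151543612031369219897821562340911571554426 i j = true := by decide +kernel
theorem tabG12 : ∀ i j, G12.Adj i j ↔ tab 4835993069977696572849124137073157166616698 i j = true := by decide +kernel
theorem tabG13 : ∀ i j, G13.Adj i j ↔ tab 9020083780637602526776932024001766247387258 i j = true := by decide +kernel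
theorem invE_4_1 : invE G4 1 = 24 := by
  rw [invE_tab tabG4]; decide +kernel
theorem invE_8_1 : invE G8 1 = 16 := by
  rw [invE_tab tabG8]; decide +kernel
theorem invE_11_1 : invE G11 1 = 16 := by
  rw [invE_tab tabG11]; decide +kernel
theorem invE_12_1 : invE G12 1 = 0 := by
  rw [invE_tab tabG12]; decide +kernel
theorem invE_13_1 : invE G13 1 = 0 := by
  rw [invE_tab tabG13]; decide +kernel
theorem invE_8_0 : invE G8 0 = 0 := by
  rw [invE_tab tabG8]; decide +kernel
theorem invE_11_0 : invE G11 0 = 8 := by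
  rw [invE_tab tabG11]; decide +kernel
theorem invP_12_1 : invP G12 1 = 0 := by
  rw [invP_tab tabG12]; decide +kernel
theorem invP_13_1 : invP G13 1 = 12 := by
  rw [invP_tab tabG13]; decide +kernel

/-- The graphs are pairwise non-isomorphic. -/
theorem pairwise_nonisomorphic_torus_E :
    IsEmpty (G4 ≃g G8) ∧
    IsEmpty (G4 ≃g G11) ∧
    IsEmpty (G4 ≃g G12) ∧
    IsEmpty (G4 ≃g G13) ∧
    IsEmpty (G8 ≃g G11) ∧
    IsEmpty (G8 ≃g G12) ∧
    IsEmpty (G8 ≃g G13) ∧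
    IsEmpty (G11 ≃g G12) ∧
    IsEmpty (G11 ≃g G13) ∧
    IsEmpty (G12 ≃g G13) := by
  refine ⟨?_, ?_, ?_, ?_, ?_, ?_, ?_, ?_, ?_, ?_⟩
  · exact ⟨fun e => absurd (invE_iso e 1) (by rw [invE_4_1, invE_8_1]; decide)⟩
  · exact ⟨fun e => absurd (invE_iso e 1) (by rw [invE_4_1, invE_11_1]; decide)⟩
  · exact ⟨fun e => absurd (invE_iso e 1) (by rw [invE_4_1, invE_12_1]; decide)⟩
  · exact ⟨fun e => absurd (invE_iso e 1) (by rw [invE_4_1, invE_13_1]; decide)⟩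
  · exact ⟨fun e => absurd (invE_iso e 0) (by rw [invE_8_0, invE_11_0]; decide)⟩
  · exact ⟨fun e => absurd (invE_iso e 1) (by rw [invE_8_1, invE_12_1]; decide)⟩
  · exact ⟨fun e => absurd (invE_iso e 1) (by rw [invE_8_1, invE_13_1]; decide)⟩
  · exact ⟨fun e => absurd (invE_iso e 1) (by rw [invE_11_1, invE_12_1]; decide)⟩
  · exact ⟨fun e => absurd (invE_iso e 1) (by rw [invE_11_1, invE_13_1]; decide)⟩
  · exact ⟨fun e => absurd (invP_iso e 1) (by rw [invP_12_1, invP_13_1]; decide)⟩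
end

section
/- The four simple graphs H₃, H₆, H₇, H₉ on vertex set {0,1,…,11} defined in the context are pairwise non-isomorphic (there is no graph isomorphism between any two distinct ones). -/
open Polynomial SimpleGraph

/-- Edge list (each unordered edge listed once) of the graph `H3`. -/
def edgesH3 : List (Fin 12 × Fin 12) :=
  [(0, 1), (0, 3), (0, 5), (0, 7), (1, 2), (1, 4), (1, 8), (1, 9), (2, 3), (2, 6), (2, 9), (2, 10), (3, 4), (3, 11), (4, 5), (4, 8), (4, 9), (5, 6), (5, 8), (5, 10), (6, 7), (6, 9), (6, 10), (7, 8), (7, 11), (8, 10), (9, 11), (10, 11)]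

/-- The simple graph on vertex set `Fin 12` with the given edge set. -/
def H3 : SimpleGraph (Fin 12) :=
  SimpleGraph.fromRel (fun i j => (i, j) ∈ edgesH3)

instance : DecidableRel H3.Adj := fun a b =>
  inferInstanceAs (Decidable (a ≠ b ∧ ((a, b) ∈ edgesH3 ∨ (b, a) ∈ edgesH3)))

/-- Edge list (each unordered edge listed once) of the graph `H6`. -/
def edgesH6 : List (Fin 12 × Fin 12) :=
  [(0, 1), (0, 3), (0, 5), (0, 7), (1, 2), (1, 4), (1, 5), (1, 8), (2, 3), (2, 4), (2, 9), (2, 11), (3, 4), (3, 10), (4, 5), (4, 11), (5, 6), (5, 8), (6, 7), (6, 8), (6, 9), (6, 11), (7, 8), (7, 10), (8, 9), (9, 10), (9, 11), (10, 11)]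

/-- The simple graph on vertex set `Fin 12` with the given edge set. -/
def H6 : SimpleGraph (Fin 12) :=
  SimpleGraph.fromRel (fun i j => (i, j) ∈ edgesH6)

instance : DecidableRel H6.Adj := fun a b =>
  inferInstanceAs (Decidable (a ≠ b ∧ ((a, b) ∈ edgesH6 ∨ (b, a) ∈ edgesH6)))

/-- Edge list (each unordered edge listed once) of the graph `H7`. -/
def edgesH7 : List (Fin 12 × Fin 12) :=
  [(0, 1), (0, 3), (0, 5), (0, 7), (1, 2), (1, 8), (1, 10), (2, 3), (2, 8), (2, 11), (3, 4), (3, 7), (4, 5), (4, 6), (4, 9), (4, 11), (5, 6), (5, 10), (5, 11), (6, 7), (6, 9), (6, 10), (7, 8), (8, 9), (9, 10), (9, 11), (10, 11)]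

/-- The simple graph on vertex set `Fin 12` with the given edge set. -/
def H7 : SimpleGraph (Fin 12) :=
  SimpleGraph.fromRel (fun i j => (i, j) ∈ edgesH7)

instance : DecidableRel H7.Adj := fun a b =>
  inferInstanceAs (Decidable (a ≠ b ∧ ((a, b) ∈ edgesH7 ∨ (b, a) ∈ edgesH7)))

/-- Edge list (each unordered edge listed once) of the graph `H9`. -/
def edgesH9 : List (Fin 12 × Fin 12) :=
  [(0, 1), (0, 3), (0, 5), (0, 7), (1, 2), (1, 8), (1, 10), (2, 3), (2, 8), (2, 11), (3, 4), (3, 7), (4, 5), (4, 6), (4, 9), (4, 10), (5, 6), (5, 9), (5, 11), (6, 7), (6, 10), (6, 11), (7, 8), (8, 9), (9, 10), (9, 11), (10, 11)]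

/-- The simple graph on vertex set `Fin 12` with the given edge set. -/
def H9 : SimpleGraph (Fin 12) :=
  SimpleGraph.fromRel (fun i j => (i, j) ∈ edgesH9)

instance : DecidableRel H9.Adj := fun a b =>
  inferInstanceAs (Decidable (a ≠ b ∧ ((a, b) ∈ edgesH9 ∨ (b, a) ∈ edgesH9)))

/-- Number of ordered non-adjacent pairs with exactly one common neighbour. -/
def coInv (G : SimpleGraph (Fin 12)) [DecidableRel G.Adj] : ℕ :=
  (Finset.univ.filter (fun p : Fin 12 × Fin 12 => ¬ G.Adj p.1 p.2 ∧
    (Finset.univ.filter (fun c => G.Adj p.1 c ∧ G.Adj p.2 c)).card = 1)).card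

theorem coInv_eq {G H : SimpleGraph (Fin 12)} [DecidableRel G.Adj] [DecidableRel H.Adj]
    (f : G ≃g H) : coInv G = coInv H := by
  have hc : ∀ a b : Fin 12,
      (Finset.univ.filter (fun c => G.Adj a c ∧ G.Adj b c)).card =
      (Finset.univ.filter (fun c => H.Adj (f a) c ∧ H.Adj (f b) c)).card := by
    intro a b
    refine Finset.card_equiv f.toEquiv ?_
    intro c
    have h1 : H.Adj (f a) (f c) ↔ G.Adj a c := f.map_rel_iff
    have h2 : H.Adj (f b) (f c) ↔ G.Adj b c := f.map_rel_iff
    simp [h1, h2]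
  unfold coInv
  refine Finset.card_equiv (Equiv.prodCongr f.toEquiv f.toEquiv) ?_
  rintro ⟨a, b⟩
  have h1 : H.Adj (f a) (f b) ↔ G.Adj a b := f.map_rel_iff
  simp [h1, hc]

theorem coInv_H3 : coInv H3 = 16 := by decide +kernel
theorem coInv_H6 : coInv H6 = 0 := by decide +kernel
theorem coInv_H7 : coInv H7 = 12 := by decide +kernel
theorem coInv_H9 : coInv H9 = 36 := by decide +kernel

/-- The graphs are pairwise non-isomorphic. -/
theorem pairwise_nonisomorphic_torus_F :
    IsEmpty (H3 ≃g H6) ∧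
    IsEmpty (H3 ≃g H7) ∧
    IsEmpty (H3 ≃g H9) ∧
    IsEmpty (H6 ≃g H7) ∧
    IsEmpty (H6 ≃g H9) ∧
    IsEmpty (H7 ≃g H9) := by
  refine ⟨⟨fun f => ?_⟩, ⟨fun f => ?_⟩, ⟨fun f => ?_⟩, ⟨fun f => ?_⟩, ⟨fun f => ?_⟩,
    ⟨fun f => ?_⟩⟩ <;>
  · have h := coInv_eq f
    simp [coInv_H3, coInv_H6, coInv_H7, coInv_H9] at h
end
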